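/- The generalized moment at (n, α) = (0, −1) satisfies ∫_ℝ e^{−s}·η_log(s) ds = 12·(4 − π)/π². -/

import Mathlib

open MeasureTheory

/-- The limiting density of the logarithm of smallest denominators. -/
noncomputable def etaLog (s : ℝ) : ℝ :=
  if s ≤ 0 then 6 / Real.pi ^ 2 * Real.exp (2 * s)
  else if s ≤ Real.log 2 then 6 / Real.pi ^ 2 * (-Real.exp (2 * s) + 2 + 4 * s)
  else 6 / Real.pi ^ 2 * (-Real.exp (2 * s) + 2
    + 2 * Real.exp (2 * s) * Real.sqrt (1 / 4 - Real.exp (-2 * s))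
    - 4 * Real.log (1 / 2 + Real.sqrt (1 / 4 - Real.exp (-2 * s))))

/-- The part of the integrand beyond `log 2`, without its constant factor. -/
noncomputable def tailFun (s : ℝ) : ℝ :=
  Real.exp (-s) * (-Real.exp (2 * s) + 2
    + 2 * Real.exp (2 * s) * Real.sqrt (1 / 4 - Real.exp (-2 * s))
    - 4 * Real.log (1 / 2 + Real.sqrt (1 / 4 - Real.exp (-2 * s))))

/-- An antiderivative of `tailFun`. -/
noncomputable def tailPrim (s : ℝ) : ℝ :=
  -Real.exp s - 6 * Real.exp (-s)
    + 2 * Real.exp s * Real.sqrt (1 / 4 - Real.exp (-2 * s))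
    + 4 * Real.arcsin (2 * Real.exp (-s))
    + 4 * Real.exp (-s) * Real.log (1 / 2 + Real.sqrt (1 / 4 - Real.exp (-2 * s)))

lemma exp_facts (s : ℝ) (hs : Real.log 2 < s) :
    0 < Real.exp (-s) ∧ Real.exp (-s) < 1 / 2 ∧ Real.exp s = (Real.exp (-s))⁻¹ ∧
    Real.exp (2 * s) = (Real.exp (-s))⁻¹ ^ 2 ∧ Real.exp (-2 * s) = Real.exp (-s) ^ 2 := by
  refine ⟨Real.exp_pos _, ?_, ?_, ?_, ?_⟩
  · have : Real.exp (-s) < Real.exp (-Real.log 2) := Real.exp_lt_exp.mpr (by linarith)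
    rw [Real.exp_neg (Real.log 2), Real.exp_log (by norm_num)] at this
    linarith
  · rw [Real.exp_neg, inv_inv]
  · rw [Real.exp_neg, inv_inv, ← Real.exp_nat_mul]; norm_num
  · rw [← Real.exp_nat_mul]; congr 1; push_cast; ring

lemma tailFun_nonneg (s : ℝ) (hs : Real.log 2 < s) : 0 ≤ tailFun s := by
  obtain ⟨h0, h1, -, h3, h4⟩ := exp_facts s hs
  unfold tailFun
  rw [h3, h4]
  set u := Real.exp (-s)
  have hpos : 0 < 1 / 4 - u ^ 2 := by nlinarith
  set r := Real.sqrt (1 / 4 - u ^ 2) with hr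
  have hr0 : 0 < r := Real.sqrt_pos.mpr hpos
  have hr2 : r ^ 2 = 1 / 4 - u ^ 2 := Real.sq_sqrt hpos.le
  have hr1 : r < 1 / 2 := by nlinarith
  apply mul_nonneg h0.le
  have hlog := Real.log_le_sub_one_of_pos (x := 1 / 2 + r) (by linarith)
  have e : -u⁻¹ ^ 2 + 2 + 2 * u⁻¹ ^ 2 * r = 2 - 2 / (1 / 2 + r) := by
    have hu : u ^ 2 = (1 / 2 - r) * (1 / 2 + r) := by linarith
    rw [inv_pow, hu]
    have : 1 / 2 - r ≠ 0 := by linarith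
    have : 1 / 2 + r ≠ 0 := by linarith
    have : 1 - r * 2 ≠ 0 := by intro h; linarith
    have : 1 - 2 * r ≠ 0 := by intro h; linarith
    have : 1 + 2 * r ≠ 0 := by intro h; linarith
    field_simp
    ring
  rw [e]
  have : 0 ≤ 2 - 2 / (1 / 2 + r) - 4 * (1 / 2 + r - 1) := by
    have : 2 - 2 / (1 / 2 + r) - 4 * (1 / 2 + r - 1)
      = 4 * r * (1 / 2 - r) / (1 / 2 + r) := by
      have : 1 / 2 + r ≠ 0 := by linarith
      field_simp
      ring
    rw [this]
    have : 0 < 1 / 2 - r := by linarith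
    positivity
  linarith

lemma tailPrim_deriv (s : ℝ) (hs : Real.log 2 < s) : HasDerivAt tailPrim (tailFun s) s := by
  obtain ⟨h0, h1, h2, h3, h4⟩ := exp_facts s hs
  have hpos : 0 < 1 / 4 - Real.exp (-2 * s) := by rw [h4]; nlinarith
  have hr0 : 0 < Real.sqrt (1 / 4 - Real.exp (-2 * s)) := Real.sqrt_pos.mpr hpos
  have hr2 := Real.sq_sqrt hpos.le
  have dneg : HasDerivAt (fun x : ℝ => Real.exp (-x)) (Real.exp (-s) * (-1)) s :=
    (hasDerivAt_neg s).exp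
  have d2 : HasDerivAt (fun x : ℝ => Real.exp (-2 * x)) (Real.exp (-2 * s) * (-2 * 1)) s :=
    ((hasDerivAt_id s).const_mul (-2)).exp
  have dr := (d2.const_sub (1 / 4)).sqrt hpos.ne'
  have dl := (dr.const_add (1 / 2)).log (by positivity)
  have da := (Real.hasDerivAt_arcsin (x := 2 * Real.exp (-s)) (by linarith)
    (by intro h; linarith)).comp s (dneg.const_mul 2)
  have D := (((((Real.hasDerivAt_exp s).neg.sub (dneg.const_mul 6)).add
    (((Real.hasDerivAt_exp s).const_mul 2).mul dr)).add (da.const_mul 4)).add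
    ((dneg.const_mul 4).mul dl))
  have hs4 : Real.sqrt (1 - (2 * Real.exp (-s)) ^ 2)
      = 2 * Real.sqrt (1 / 4 - Real.exp (-2 * s)) := by
    rw [show 1 - (2 * Real.exp (-s)) ^ 2 = 2 ^ 2 * (1 / 4 - Real.exp (-2 * s)) by rw [h4]; ring,
      Real.sqrt_mul (by norm_num), Real.sqrt_sq (by norm_num)]
  refine (D.congr_deriv ?_)
  rw [hs4]
  unfold tailFun
  rw [h3, h2, h4] at *
  set u := Real.exp (-s)
  set r := Real.sqrt (1 / 4 - u ^ 2)
  set L := Real.log (1 / 2 + r)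
  have hu : u ^ 2 = (1 / 2 - r) * (1 / 2 + r) := by linarith
  have e1 : -(u ^ 2 * (-2 * 1)) / (2 * r) / (1 / 2 + r) = (1 / 2 - r) / r := by
    have : 1 / 2 + r ≠ 0 := by positivity
    rw [hu]
    field_simp
    try ring
  rw [e1]
  field_simp
  ring_nf
  try grind

lemma tailPrim_cont : Continuous fun s : ℝ => -Real.exp s - 6 * Real.exp (-s)
    + 2 * Real.exp s * Real.sqrt (1 / 4 - Real.exp (-2 * s))
    + 4 * Real.arcsin (2 * Real.exp (-s))
    + 4 * Real.exp (-s) * Real.log (1 / 2 + Real.sqrt (1 / 4 - Real.exp (-2 * s))) := by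
  have h : ∀ s : ℝ, 1 / 2 + Real.sqrt (1 / 4 - Real.exp (-2 * s)) ≠ 0 := fun s => by positivity
  have := Continuous.log (f := fun s : ℝ => 1 / 2 + Real.sqrt (1 / 4 - Real.exp (-2 * s)))
    (by fun_prop) h
  have := Real.continuous_arcsin
  fun_prop

lemma tailPrim_log : tailPrim (Real.log 2) = -5 + 2 * Real.pi - 2 * Real.log 2 := by
  unfold tailPrim
  have h4 : Real.exp (-2 * Real.log 2) = Real.exp (-Real.log 2) ^ 2 := by
    rw [← Real.exp_nat_mul]; congr 1; push_cast; ring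
  rw [h4, Real.exp_neg, Real.exp_log (by norm_num)]
  norm_num
  rw [show (1 / 2 : ℝ) = 2⁻¹ by norm_num, Real.log_inv]
  ring

lemma tailPrim_lim : Filter.Tendsto tailPrim Filter.atTop (nhds 0) := by
  have key : ∀ᶠ s in Filter.atTop, (fun u : ℝ =>
      - 2 * u / (1 / 2 + Real.sqrt (1 / 4 - u ^ 2)) - 6 * u + 4 * Real.arcsin (2 * u)
      + 4 * u * Real.log (1 / 2 + Real.sqrt (1 / 4 - u ^ 2))) (Real.exp (-s)) = tailPrim s := by
    filter_upwards [Filter.eventually_gt_atTop (Real.log 2)] with s hs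
    obtain ⟨h0, h1, h2, h3, h4⟩ := exp_facts s hs
    unfold tailPrim
    rw [h4, h2]
    set u := Real.exp (-s)
    have hpos : 0 < 1 / 4 - u ^ 2 := by nlinarith
    set r := Real.sqrt (1 / 4 - u ^ 2) with hr
    have hr0 : 0 < r := Real.sqrt_pos.mpr hpos
    have hr2 : r ^ 2 = 1 / 4 - u ^ 2 := Real.sq_sqrt hpos.le
    have e : - 2 * u / (1 / 2 + r) = -u⁻¹ + 2 * u⁻¹ * r := by
      have : 1 / 2 + r ≠ 0 := by positivity
      field_simp
      nlinarith
    simp only [e]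
    ring
  refine Filter.Tendsto.congr' key ?_
  have hc : Continuous (fun u : ℝ =>
      - 2 * u / (1 / 2 + Real.sqrt (1 / 4 - u ^ 2)) - 6 * u + 4 * Real.arcsin (2 * u)
      + 4 * u * Real.log (1 / 2 + Real.sqrt (1 / 4 - u ^ 2))) := by
    have h : ∀ u : ℝ, 1 / 2 + Real.sqrt (1 / 4 - u ^ 2) ≠ 0 := fun s => by positivity
    have h1 := Continuous.log (f := fun u : ℝ => 1 / 2 + Real.sqrt (1 / 4 - u ^ 2))
      (by fun_prop) h
    have h2 := Continuous.div (f := fun u : ℝ => -2 * u)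
      (g := fun u : ℝ => 1 / 2 + Real.sqrt (1 / 4 - u ^ 2)) (by fun_prop) (by fun_prop) h
    have := Real.continuous_arcsin
    fun_prop
  have := (hc.tendsto 0).comp (Real.tendsto_exp_neg_atTop_nhds_zero)
  simpa [Function.comp_def] using this

lemma mid_integral : ∫ s in (0:ℝ)..Real.log 2,
    Real.exp (-s) * (-Real.exp (2 * s) + 2 + 4 * s) = 2 - 2 * Real.log 2 := by
  rw [intervalIntegral.integral_eq_sub_of_hasDerivAt
    (f := fun s => -Real.exp s - 6 * Real.exp (-s) - 4 * (s * Real.exp (-s)))]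
  · rw [Real.exp_neg, Real.exp_log (by norm_num)]
    norm_num
    ring
  · intro s _
    have dneg : HasDerivAt (fun x : ℝ => Real.exp (-x)) (Real.exp (-s) * (-1)) s :=
      (hasDerivAt_neg s).exp
    refine (((Real.hasDerivAt_exp s).neg.sub (dneg.const_mul 6)).sub
      (((hasDerivAt_id s).mul dneg).const_mul 4)).congr_deriv ?_
    have : Real.exp s = Real.exp (-s) * Real.exp (2 * s) := by
      rw [← Real.exp_add]; congr 1; ring
    rw [this]
    simp only [id]
    ring
  · apply Continuous.intervalIntegrable
    fun_prop

theorem etaLog_negative_first_moment :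
    (∫ s : ℝ, Real.exp (-s) * etaLog s) = 12 * (4 - Real.pi) / Real.pi ^ 2 := by
  have hl : 0 < Real.log 2 := Real.log_pos (by norm_num)
  set c := 6 / Real.pi ^ 2 with hc
  have hcont : ContinuousWithinAt tailPrim (Set.Ici (Real.log 2)) (Real.log 2) :=
    (show Continuous tailPrim from tailPrim_cont).continuousWithinAt
  have I3 : IntegrableOn tailFun (Set.Ioi (Real.log 2)) :=
    integrableOn_Ioi_deriv_of_nonneg hcont tailPrim_deriv tailFun_nonneg tailPrim_lim
  have V3 : ∫ s in Set.Ioi (Real.log 2), tailFun s = 0 - tailPrim (Real.log 2) :=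
    integral_Ioi_of_hasDerivAt_of_nonneg hcont tailPrim_deriv tailFun_nonneg tailPrim_lim
  rw [tailPrim_log] at V3
  have E1 : Set.EqOn (fun s => c * Real.exp s) (fun s => Real.exp (-s) * etaLog s)
      (Set.Iic 0) := by
    intro s hs
    have : Real.exp s = Real.exp (-s) * Real.exp (2 * s) := by
      rw [← Real.exp_add]; congr 1; ring
    simp only [etaLog, if_pos (Set.mem_Iic.mp hs)]
    rw [this]; ring
  have E2 : Set.EqOn (fun s => c * (Real.exp (-s) * (-Real.exp (2 * s) + 2 + 4 * s)))
      (fun s => Real.exp (-s) * etaLog s) (Set.Ioc 0 (Real.log 2)) := by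
    intro s hs
    simp only [etaLog, if_neg (not_le.mpr hs.1), if_pos hs.2]
    ring
  have E3 : Set.EqOn (fun s => c * tailFun s)
      (fun s => Real.exp (-s) * etaLog s) (Set.Ioi (Real.log 2)) := by
    intro s hs
    have hs' : Real.log 2 < s := hs
    simp only [etaLog, tailFun, if_neg (not_le.mpr hs'), if_neg (not_le.mpr (hl.trans hs'))]
    ring
  have J1 : IntegrableOn (fun s => Real.exp (-s) * etaLog s) (Set.Iic 0) :=
    IntegrableOn.congr_fun ((integrableOn_exp_Iic 0).const_mul c) E1 measurableSet_Iic
  have J2 : IntegrableOn (fun s => Real.exp (-s) * etaLog s) (Set.Ioc 0 (Real.log 2)) :=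
    IntegrableOn.congr_fun
      ((Continuous.integrableOn_Ioc (by fun_prop))) E2 measurableSet_Ioc
  have J3 : IntegrableOn (fun s => Real.exp (-s) * etaLog s) (Set.Ioi (Real.log 2)) :=
    IntegrableOn.congr_fun (I3.const_mul c) E3 measurableSet_Ioi
  have J23 : IntegrableOn (fun s => Real.exp (-s) * etaLog s) (Set.Ioi 0) := by
    rw [← Set.Ioc_union_Ioi_eq_Ioi hl.le]; exact J2.union J3
  rw [← intervalIntegral.integral_Iic_add_Ioi J1 J23, ← Set.Ioc_union_Ioi_eq_Ioi hl.le,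
    setIntegral_union (Set.Ioc_disjoint_Ioi le_rfl) measurableSet_Ioi J2 J3,
    ← setIntegral_congr_fun measurableSet_Iic E1, ← setIntegral_congr_fun measurableSet_Ioc E2,
    ← setIntegral_congr_fun measurableSet_Ioi E3, integral_const_mul, integral_const_mul,
    integral_const_mul, V3, integral_exp_Iic_zero, ← intervalIntegral.integral_of_le hl.le,
    mid_integral, hc]
  ring
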